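/- Displacement is linearly bounded below by the distance to the Margulis domain (Proposition 4.8): For all real ε > 0 and δ > 0 there exists a constant c(ε,δ) > 0, depending only on ε and δ, satisfying the following property. Let (X,σ) be a proper δ-hyperbolic GCB-space and let g be a non-elliptic σ-isometry of X such that M_ε(g) ≠ ∅. Then for every x ∈ X it holds d(x, g x) ≥ c(ε,δ)·d(x, M_ε(g)). In particular, for all 0 < ε1 ≤ ε2, every point of M_{ε2}(g) lies at distance at most ε2/c(ε1,δ) from M_{ε1}(g). -/

import Mathlib

open Metric Filter

/-- Four-points condition for `δ`-hyperbolicity. -/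
def IsDeltaHyperbolic (X : Type*) [MetricSpace X] (δ : ℝ) : Prop :=
  ∀ x y z w : X,
    dist x y + dist z w ≤ max (dist x z + dist y w) (dist x w + dist y z) + 2 * δ

/-- `X` is `P₀`-packed at scale `r₀`: any subset of a closed ball of radius `3r₀` whose
points are pairwise at distance `> 2r₀` has cardinality at most `P₀`. -/
def IsPacked (X : Type*) [MetricSpace X] (P₀ r₀ : ℝ) : Prop :=
  ∀ x : X, ∀ S : Finset X, (↑S ⊆ closedBall x (3 * r₀)) →
    (∀ a ∈ S, ∀ b ∈ S, a ≠ b → 2 * r₀ < dist a b) → (S.card : ℝ) ≤ P₀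

/-- A geodesically complete, convex, consistent, reversible geodesic bicombing on `X`.
Together with completeness of `X` this is the notion of GCB-space. -/
structure IsGCB {X : Type*} [MetricSpace X] (σ : X → X → ℝ → X) : Prop where
  source : ∀ x y : X, σ x y 0 = x
  target : ∀ x y : X, σ x y 1 = y
  geodesic : ∀ x y : X, ∀ t ∈ Set.Icc (0:ℝ) 1, ∀ t' ∈ Set.Icc (0:ℝ) 1,
    dist (σ x y t) (σ x y t') = |t - t'| * dist x y
  convex : ∀ x y x' y' : X,
    ConvexOn ℝ (Set.Icc (0:ℝ) 1) fun t => dist (σ x y t) (σ x' y' t)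
  consistent : ∀ x y : X, ∀ s t l : ℝ, 0 ≤ s → s ≤ t → t ≤ 1 → l ∈ Set.Icc (0:ℝ) 1 →
    σ (σ x y s) (σ x y t) l = σ x y ((1 - l) * s + l * t)
  reversible : ∀ x y : X, ∀ t ∈ Set.Icc (0:ℝ) 1, σ x y t = σ y x (1 - t)
  geodComplete : ∀ x y : X, ∃ γ : ℝ → X, Isometry γ ∧
    (∀ s t : ℝ, s ≤ t → ∀ l ∈ Set.Icc (0:ℝ) 1, σ (γ s) (γ t) l = γ (s + l * (t - s))) ∧
    (∀ t ∈ Set.Icc (0:ℝ) 1, σ x y t = γ (t * dist x y))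

/-- `g` is a `σ`-isometry: a surjective isometry preserving the bicombing `σ`. -/
def IsSigmaIsometry {X : Type*} [MetricSpace X] (σ : X → X → ℝ → X) (g : X ≃ᵢ X) : Prop :=
  ∀ x y : X, ∀ t ∈ Set.Icc (0:ℝ) 1, g (σ x y t) = σ (g x) (g y) t

/-- A group of isometries is discrete if for every `x` and `R` only finitely many of its
elements displace `x` at most `R`. -/
def IsDiscreteSubgroup {X : Type*} [MetricSpace X] (Γ : Subgroup (X ≃ᵢ X)) : Prop :=
  ∀ x : X, ∀ R : ℝ, {g : X ≃ᵢ X | g ∈ Γ ∧ dist x (g x) ≤ R}.Finite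

/-- A group is virtually nilpotent if it has a nilpotent subgroup of finite index. -/
def IsVirtuallyNilpotent (G : Type*) [Group G] : Prop :=
  ∃ H : Subgroup G, H.FiniteIndex ∧ Group.IsNilpotent H

/-- `Γ` is non-elementary: it contains two elements generating a subgroup that is not
virtually nilpotent. -/
def IsNonElementary {X : Type*} [MetricSpace X] (Γ : Subgroup (X ≃ᵢ X)) : Prop :=
  ∃ a b : X ≃ᵢ X, a ∈ Γ ∧ b ∈ Γ ∧
    ¬ IsVirtuallyNilpotent ↥(Subgroup.closure ({a, b} : Set (X ≃ᵢ X)))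

/-- An isometry is non-elliptic if its orbits are unbounded. -/
def IsNonElliptic {X : Type*} [MetricSpace X] (g : X ≃ᵢ X) : Prop :=
  ∀ x : X, ¬ Bornology.IsBounded (Set.range fun n : ℤ => (g ^ n) x)

/-- The `r`-almost stabilizer `Γ_r(x)`, generated by the elements of `Γ` displacing `x`
at most `r`. -/
def almostStabilizer {X : Type*} [MetricSpace X] (Γ : Subgroup (X ≃ᵢ X)) (r : ℝ) (x : X) :
    Subgroup (X ≃ᵢ X) :=
  Subgroup.closure {g : X ≃ᵢ X | g ∈ Γ ∧ dist x (g x) ≤ r}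

/-- The nilpotence radius of `Γ` at `x`. -/
noncomputable def nilrad {X : Type*} [MetricSpace X] (Γ : Subgroup (X ≃ᵢ X)) (x : X) : ℝ :=
  sSup {r : ℝ | 0 ≤ r ∧ IsVirtuallyNilpotent ↥(almostStabilizer Γ r x)}

/-- The Margulis domain `M_ε(g)`. -/
def margulisDomain {X : Type*} [MetricSpace X] (g : X ≃ᵢ X) (ε : ℝ) : Set X :=
  {x : X | dist x (g x) ≤ ε}

/-- The generalized Margulis domain `ℳ_ε(g) = ⋃_{i ≠ 0} M_ε(gⁱ)`. -/
def genMargulisDomain {X : Type*} [MetricSpace X] (g : X ≃ᵢ X) (ε : ℝ) : Set X :=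
  ⋃ i ∈ {i : ℤ | i ≠ 0}, margulisDomain (g ^ i) ε

/-- `f` parameterizes a geodesic segment from `x` to `y` on `[0, dist x y]`. -/
def IsGeodesicFrom {X : Type*} [MetricSpace X] (f : ℝ → X) (x y : X) : Prop :=
  f 0 = x ∧ f (dist x y) = y ∧
    ∀ s ∈ Set.Icc 0 (dist x y), ∀ t ∈ Set.Icc 0 (dist x y), dist (f s) (f t) = |s - t|

/-- `X` is a geodesic space. -/
def IsGeodesicSpace (X : Type*) [MetricSpace X] : Prop :=
  ∀ x y : X, ∃ f : ℝ → X, IsGeodesicFrom f x y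

/-- `C` is `lam`-quasiconvex: any two of its points are joined by a geodesic contained in
the closed `lam`-neighbourhood of `C`. -/
def IsQuasiconvex {X : Type*} [MetricSpace X] (lam : ℝ) (C : Set X) : Prop :=
  ∀ x ∈ C, ∀ y ∈ C, ∃ f : ℝ → X, IsGeodesicFrom f x y ∧
    ∀ t ∈ Set.Icc 0 (dist x y), infDist (f t) C ≤ lam

/-- `C` is a convex subset: any two of its points are joined by a geodesic inside `C`. -/
def IsConvexSubset {X : Type*} [MetricSpace X] (C : Set X) : Prop :=
  ∀ x ∈ C, ∀ y ∈ C, ∃ f : ℝ → X, IsGeodesicFrom f x y ∧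
    ∀ t ∈ Set.Icc 0 (dist x y), f t ∈ C

/-- Arc-length concatenation of three paths, of respective lengths `d₁`, `d₂` and the rest. -/
noncomputable def concatPath {X : Type*} (d₁ d₂ : ℝ) (f₁ f₂ f₃ : ℝ → X) : ℝ → X :=
  fun t => if t ≤ d₁ then f₁ t else if t ≤ d₁ + d₂ then f₂ (t - d₁) else f₃ (t - d₁ - d₂)

namespace IsGCB

variable {X : Type*} [MetricSpace X] {σ : X → X → ℝ → X}

/-- Distances along two geodesics of the bicombing are bounded by the affine interpolation of
the distances of their endpoints. -/
lemma dist_le_interpolate (hσ : IsGCB σ) (x y x' y' : X) {t : ℝ} (ht : t ∈ Set.Icc (0:ℝ) 1) :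
    dist (σ x y t) (σ x' y' t) ≤ (1 - t) * dist x x' + t * dist y y' := by
  have h := (hσ.convex x y x' y').2 (Set.left_mem_Icc.2 zero_le_one)
    (Set.right_mem_Icc.2 zero_le_one) (sub_nonneg.2 ht.2) ht.1 (by ring)
  simpa [hσ.source, hσ.target] using h

lemma dist_source (hσ : IsGCB σ) (x y : X) {t : ℝ} (ht : t ∈ Set.Icc (0:ℝ) 1) :
    dist x (σ x y t) = t * dist x y := by
  have h := hσ.geodesic x y 0 (Set.left_mem_Icc.2 zero_le_one) t ht
  rwa [hσ.source, zero_sub, abs_neg, abs_of_nonneg ht.1] at h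

lemma dist_target (hσ : IsGCB σ) (x y : X) {t : ℝ} (ht : t ∈ Set.Icc (0:ℝ) 1) :
    dist (σ x y t) y = (1 - t) * dist x y := by
  have h := hσ.geodesic x y t ht 1 (Set.right_mem_Icc.2 zero_le_one)
  rwa [hσ.target, abs_sub_comm, abs_of_nonneg (sub_nonneg.2 ht.2)] at h

/-- The displacement function of a `σ`-isometry is convex along the bicombing. -/
lemma displacement_le (hσ : IsGCB σ) {g : X ≃ᵢ X} (hg : IsSigmaIsometry σ g) (x y : X)
    {t : ℝ} (ht : t ∈ Set.Icc (0:ℝ) 1) :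
    dist (σ x y t) (g (σ x y t)) ≤ (1 - t) * dist x (g x) + t * dist y (g y) := by
  rw [hg x y t ht]
  exact hσ.dist_le_interpolate x y (g x) (g y) ht

/-- Twice the displacement of the midpoint of `x` and `h x` is at most the displacement of `x`
under `h ^ 2`. -/
lemma displacement_midpoint_le (hσ : IsGCB σ) {h : X ≃ᵢ X} (hh : IsSigmaIsometry σ h) (x : X) :
    2 * dist (σ x (h x) (1 / 2)) (h (σ x (h x) (1 / 2))) ≤ dist x (h (h x)) := by
  have ht : (1 / 2 : ℝ) ∈ Set.Icc (0:ℝ) 1 := by norm_num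
  have e : h (σ x (h x) (1 / 2)) = σ (h (h x)) (h x) (1 / 2) := by
    rw [hh x (h x) _ ht, hσ.reversible _ _ _ ht]
    norm_num
  have := hσ.dist_le_interpolate x (h x) (h (h x)) (h x) ht
  rw [e]
  simp only [dist_self] at this
  linarith

end IsGCB

section Displacement

variable {X : Type*} [MetricSpace X] {σ : X → X → ℝ → X}

lemma IsSigmaIsometry.pow {g : X ≃ᵢ X} (hg : IsSigmaIsometry σ g) (n : ℕ) :
    IsSigmaIsometry σ (g ^ n) := by
  induction n with
  | zero => intro x y t _; simp
  | succ n ih =>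
    intro x y t ht
    simp only [pow_succ, IsometryEquiv.mul_apply]
    rw [hg x y t ht, ih _ _ t ht]

lemma dist_pow_apply_le (g : X ≃ᵢ X) (x : X) (n : ℕ) :
    dist x ((g ^ n) x) ≤ n * dist x (g x) := by
  induction n with
  | zero => simp
  | succ n ih =>
    have h1 := dist_triangle x ((g ^ n) x) ((g ^ n) (g x))
    rw [(g ^ n).dist_eq] at h1
    rw [pow_succ, IsometryEquiv.mul_apply]
    push_cast
    linarith

lemma dist_pow_apply_apply (g : X ≃ᵢ X) (x : X) (n : ℕ) :
    dist ((g ^ n) x) (g ((g ^ n) x)) = dist x (g x) := by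
  rw [← IsometryEquiv.mul_apply, ← pow_succ', pow_succ, IsometryEquiv.mul_apply,
    IsometryEquiv.dist_eq]

/-- Near `p` there is a point whose displacement is at most the average displacement of `p`
under `g ^ 2 ^ k`. -/
lemma exists_mul_displacement_le (hσ : IsGCB σ) {g : X ≃ᵢ X} (hg : IsSigmaIsometry σ g)
    (k : ℕ) (p : X) :
    ∃ z, dist p z ≤ 2 ^ k * dist p (g p) ∧
      2 ^ k * dist z (g z) ≤ dist p ((g ^ 2 ^ k) p) := by
  induction k generalizing p with
  | zero => exact ⟨p, by simp, by simp⟩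
  | succ k ih =>
    have ht : (1 / 2 : ℝ) ∈ Set.Icc (0:ℝ) 1 := by norm_num
    have hmid := hσ.displacement_midpoint_le (hg.pow (2 ^ k)) p
    have hconv := hσ.displacement_le hg p ((g ^ 2 ^ k) p) ht
    have hd := hσ.dist_source p ((g ^ 2 ^ k) p) ht
    rw [dist_pow_apply_apply] at hconv
    have hpow := dist_pow_apply_le g p (2 ^ k)
    push_cast at hpow
    set h := g ^ 2 ^ k with hdef
    set m := σ p (h p) (1 / 2)
    obtain ⟨z, hz, hz'⟩ := ih m
    have hpos : (0:ℝ) ≤ 2 ^ k := by positivity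
    have hm : dist m (g m) ≤ dist p (g p) := by linarith
    refine ⟨z, ?_, ?_⟩
    · have h1 := dist_triangle p m z
      have h2 := mul_le_mul_of_nonneg_left hm hpos
      have h3 : (0:ℝ) ≤ dist p (h p) := dist_nonneg
      rw [pow_succ]
      linarith
    · have e : (g ^ 2 ^ (k + 1)) p = h (h p) := by
        rw [hdef, ← IsometryEquiv.mul_apply, ← pow_add, pow_succ, mul_two]
      rw [e, pow_succ]
      linarith

/-- If `p` is a nearest point to `x` on the geodesic `σ p q`, then going from `x` to `q` through
`p` is almost geodesic. -/
lemma dist_add_dist_le_of_nearest (hσ : IsGCB σ) {δ : ℝ} (hδ : 0 < δ)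
    (hX : IsDeltaHyperbolic X δ) {x p q : X} (hpq : 3 * δ ≤ dist p q)
    (hmin : ∀ t ∈ Set.Icc (0:ℝ) 1, dist x p ≤ dist x (σ p q t)) :
    dist x p + dist p q ≤ dist x q + 5 * δ := by
  have hpos : 0 < dist p q := by linarith
  have ht : 3 * δ / dist p q ∈ Set.Icc (0:ℝ) 1 :=
    ⟨by positivity, (div_le_one hpos).2 hpq⟩
  have h1 := hσ.dist_source p q ht
  have h2 := hσ.dist_target p q ht
  have h3 := hmin _ ht
  rw [sub_mul, div_mul_cancel₀ _ hpos.ne'] at h2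
  rw [div_mul_cancel₀ _ hpos.ne'] at h1
  set w := σ p q (3 * δ / dist p q)
  have h4 := hX x w p q
  rw [dist_comm w p] at h4
  rcases le_total (dist x p + dist w q) (dist x q + dist p w) with h | h
  · rw [max_eq_right h] at h4
    linarith
  · rw [max_eq_left h] at h4
    linarith

/-- If `p`, `q` are far apart nearest points to `x`, `y` on the geodesic between them, then
the path from `x` to `y` through `p` and `q` is almost geodesic. -/
lemma dist_add_dist_add_dist_le_of_nearest (hσ : IsGCB σ) {δ : ℝ} (hδ : 0 < δ)
    (hX : IsDeltaHyperbolic X δ) {x y p q : X} (hpq : 7 * δ ≤ dist p q)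
    (hx : ∀ t ∈ Set.Icc (0:ℝ) 1, dist x p ≤ dist x (σ p q t))
    (hy : ∀ t ∈ Set.Icc (0:ℝ) 1, dist y q ≤ dist y (σ q p t)) :
    dist x p + dist p q + dist q y ≤ dist x y + 12 * δ := by
  have h1 := dist_add_dist_le_of_nearest hσ hδ hX (by linarith) hx
  have h2 := dist_add_dist_le_of_nearest hσ hδ hX (by rw [dist_comm]; linarith) hy
  have h3 := hX x q y p
  rw [dist_comm q p] at h2 h3
  rw [dist_comm y q] at h2
  rw [dist_comm y p] at h2 h3
  rcases le_total (dist x y + dist p q) (dist x p + dist q y) with h | h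
  · rw [max_eq_right h] at h3
    linarith
  · rw [max_eq_left h] at h3
    linarith

/-- Points far from the Margulis domain `M_ε(g)` are displaced by at least `2 * ε`. -/
lemma two_mul_le_displacement_of_far (hσ : IsGCB σ) {ε δ : ℝ} (hδ : 0 < δ)
    (hX : IsDeltaHyperbolic X δ) {g : X ≃ᵢ X} (hg : IsSigmaIsometry σ g) {k : ℕ}
    (hk : 14 * δ ≤ 2 ^ k * ε) {x p : X} (hp : p ∈ margulisDomain g ε)
    (hmin : ∀ z ∈ margulisDomain g ε, dist x p ≤ dist x z)
    (hfar : 2 * (2 ^ k * ε) + 3 * δ ≤ dist x p) : 2 * ε ≤ dist x (g x) := by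
  by_contra! hlt
  have hpos : (0:ℝ) < 2 ^ k := by positivity
  obtain ⟨z, hpz, hz⟩ := exists_mul_displacement_le hσ hg k p
  have hpε : dist p (g p) ≤ ε := hp
  have hpz' : dist p z ≤ 2 ^ k * ε := hpz.trans (by gcongr)
  rcases le_total (dist z (g z)) (ε / 2) with hc | hc
  · have ht : (1 / 3 : ℝ) ∈ Set.Icc (0:ℝ) 1 := by norm_num
    have h1 := hσ.displacement_le hg z x ht
    have h2 := hσ.dist_target z x ht
    have h3 := hmin (σ z x (1 / 3)) (by show dist _ _ ≤ ε; linarith)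
    have h4 := dist_triangle z p x
    rw [dist_comm x (σ z x (1 / 3))] at h3
    rw [dist_comm z p, dist_comm p x] at h4
    linarith
  · set h := g ^ 2 ^ k with hdef
    have hinv : ∀ w ∈ margulisDomain g ε, h w ∈ margulisDomain g ε := by
      intro w hw
      show dist _ _ ≤ ε
      rw [dist_pow_apply_apply]
      exact hw
    have hconv : ∀ u ∈ margulisDomain g ε, ∀ v ∈ margulisDomain g ε,
        ∀ t ∈ Set.Icc (0:ℝ) 1, σ u v t ∈ margulisDomain g ε := by
      intro u hu v hv t ht
      have h1 := hσ.displacement_le hg u v ht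
      have h2 : dist u (g u) ≤ ε := hu
      have h3 : dist v (g v) ≤ ε := hv
      show dist _ _ ≤ ε
      nlinarith [ht.1, ht.2]
    have hA : 7 * δ ≤ dist p (h p) := by
      have := mul_le_mul_of_nonneg_left hc hpos.le
      linarith
    have hmin' : ∀ t ∈ Set.Icc (0:ℝ) 1, dist (h x) (h p) ≤ dist (h x) (σ (h p) p t) := by
      intro t ht
      have hmem := hconv _ (hinv p hp) _ hp t ht
      have hback : h.symm (σ (h p) p t) ∈ margulisDomain g ε := by
        have e := dist_pow_apply_apply g (h.symm (σ (h p) p t)) (2 ^ k)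
        rw [← hdef, h.apply_symm_apply] at e
        show dist _ _ ≤ ε
        rw [← e]
        exact hmem
      have h1 := hmin _ hback
      rwa [← h.dist_eq x, ← h.dist_eq x, h.apply_symm_apply] at h1
    have hlong := dist_add_dist_add_dist_le_of_nearest hσ hδ hX hA
      (fun t ht => hmin _ (hconv _ hp _ (hinv p hp) t ht)) hmin'
    rw [h.dist_eq, dist_comm p x] at hlong
    have hpow := dist_pow_apply_le g x (2 ^ k)
    push_cast at hpow
    rw [← hdef] at hpow
    have := mul_le_mul_of_nonneg_left hlt.le hpos.le
    linarith

/-- If all points at distance at least `R` from `M_ε(g)` are displaced by at least `2 * ε`, then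
the displacement grows at least linearly with slope `ε / R`. -/
lemma div_mul_infDist_le_displacement [ProperSpace X] (hσ : IsGCB σ) {ε R : ℝ} (hε : 0 < ε)
    (hR : 0 < R) {g : X ≃ᵢ X} (hg : IsSigmaIsometry σ g)
    (hne : (margulisDomain g ε).Nonempty)
    (hfar : ∀ x, ∀ p ∈ margulisDomain g ε, (∀ z ∈ margulisDomain g ε, dist x p ≤ dist x z) →
      R ≤ dist x p → 2 * ε ≤ dist x (g x)) (x : X) :
    ε / R * infDist x (margulisDomain g ε) ≤ dist x (g x) := by
  have hclosed : IsClosed (margulisDomain g ε) :=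
    isClosed_le (continuous_id.dist g.continuous) continuous_const
  obtain ⟨p, hp, hxp⟩ := hclosed.exists_infDist_eq_dist hne x
  have hmin : ∀ z ∈ margulisDomain g ε, dist x p ≤ dist x z := fun z hz =>
    hxp ▸ infDist_le_dist_of_mem hz
  have hpε : dist p (g p) ≤ ε := hp
  rw [hxp, div_mul_eq_mul_div, div_le_iff₀ hR]
  rcases le_or_gt (dist x p) R with hD | hD
  · by_cases hx : x ∈ margulisDomain g ε
    · have h0 := hmin x hx
      rw [dist_self] at h0
      have : 0 ≤ dist x (g x) * R := by positivity
      nlinarith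
    · have hx' : ε < dist x (g x) := not_le.1 hx
      nlinarith [dist_nonneg (x := x) (y := p)]
  · have hD0 : 0 < dist x p := hR.trans hD
    have ht : R / dist x p ∈ Set.Icc (0:ℝ) 1 := ⟨by positivity, (div_le_one hD0).2 hD.le⟩
    have h1 := hσ.dist_source p x ht
    have h2 := hσ.dist_target p x ht
    have h3 := hσ.displacement_le hg p x ht
    rw [dist_comm p x, sub_mul, div_mul_cancel₀ _ hD0.ne'] at h2
    rw [dist_comm p x, div_mul_cancel₀ _ hD0.ne'] at h1
    have h4 := hfar (σ p x (R / dist x p)) p hp (fun z hz => by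
      have := hmin z hz
      have := dist_triangle x (σ p x (R / dist x p)) z
      rw [dist_comm x (σ p x (R / dist x p))] at this
      rw [dist_comm _ p]
      linarith) (by rw [dist_comm, h1])
    have h5 : ε ≤ R / dist x p * dist x (g x) := by nlinarith [ht.1, ht.2]
    rw [div_mul_eq_mul_div, le_div_iff₀ hD0] at h5
    linarith

end Displacement

/-- **Proposition 4.8**: the displacement is linearly bounded below by the distance to the
Margulis domain; in particular every point of `M_{ε₂}(g)` lies at distance at most
`ε₂/c(ε,δ)` from `M_ε(g)`. -/
theorem displacement_bounded_by_distance_to_margulis_domain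
    (ε δ : ℝ) (hε : 0 < ε) (hδ : 0 < δ) :
    ∃ c : ℝ, 0 < c ∧
      ∀ (X : Type*) [MetricSpace X] [ProperSpace X] (σ : X → X → ℝ → X),
        IsGCB σ → IsDeltaHyperbolic X δ →
        ∀ g : X ≃ᵢ X, IsSigmaIsometry σ g → IsNonElliptic g →
          (margulisDomain g ε).Nonempty →
          (∀ x : X, c * infDist x (margulisDomain g ε) ≤ dist x (g x)) ∧
          (∀ ε₂ : ℝ, ε ≤ ε₂ → ∀ x ∈ margulisDomain g ε₂,
            infDist x (margulisDomain g ε) ≤ ε₂ / c) := by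
  obtain ⟨k, hk⟩ := pow_unbounded_of_one_lt (14 * δ / ε) (one_lt_two (α := ℝ))
  rw [div_lt_iff₀ hε] at hk
  have hR : (0:ℝ) < 2 * (2 ^ k * ε) + 3 * δ := by positivity
  refine ⟨ε / (2 * (2 ^ k * ε) + 3 * δ), by positivity, ?_⟩
  intro X _ _ σ hσ hX g hg _ hne
  have main := div_mul_infDist_le_displacement hσ hε hR hg hne fun x p hp hmin hfar =>
    two_mul_le_displacement_of_far hσ hδ hX hg hk.le hp hmin hfar
  refine ⟨main, fun ε₂ _ x hx => ?_⟩
  rw [le_div_iff₀ (by positivity), mul_comm]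
  exact (main x).trans hx
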